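/- arXiv:2005.00772 — 4 statements merged into one kernel-verified Lean document; each statement's English description precedes it below -/
import Mathlib

section
/- For all natural numbers n and λ, ∑_{k=0}^{n} (−1)^k · binom(n,k) · binom(2n−2k+2λ, n−k+λ) · C_{k+λ} equals (λ! / (n+2)_λ) · binom(2λ, λ) · binom(n, ⌊n/2⌋) · binom(n+2λ, λ+⌊n/2⌋), as an equality of rational numbers. -/
/-- Rational Pochhammer symbol: `(x)_0 = 1`, `(x)_n = x(x+1)⋯(x+n-1)`. -/
def pochQ (x : ℚ) (n : ℕ) : ℚ := ∏ i ∈ Finset.range n, (x + i)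

open Finset in
/-- Alternating convolution of shifted central binomial coefficients. -/
def FF (n p q : ℕ) : ℚ := ∑ ij ∈ antidiagonal n,
  (n.choose ij.1 : ℚ) * ((-1) ^ ij.2 * (Nat.centralBinom (ij.1 + p) : ℚ)
    * (Nat.centralBinom (ij.2 + q) : ℚ))

lemma FF_succ (n p q : ℕ) : FF (n + 1) p q = FF n (p + 1) q - FF n p (q + 1) := by
  unfold FF
  rw [Finset.sum_antidiagonal_choose_succ_mul
    (fun i j => ((-1) ^ j * (Nat.centralBinom (i + p) : ℚ) * (Nat.centralBinom (j + q) : ℚ)))]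
  rw [add_comm, sub_eq_add_neg, ← Finset.sum_neg_distrib]
  congr 1
  · refine Finset.sum_congr rfl fun ij h => ?_
    rw [Finset.HasAntidiagonal.mem_antidiagonal] at h
    have : n.choose ij.2 = n.choose ij.1 := Nat.choose_symm_of_eq_add (by omega)
    rw [this, show ij.1 + 1 + p = ij.1 + (p + 1) by ring]
  · refine Finset.sum_congr rfl fun ij _ => ?_
    rw [show ij.2 + 1 + q = ij.2 + (q + 1) by ring]
    ring

lemma FF_symm (n p q : ℕ) : FF n p q = (-1) ^ n * FF n q p := by
  unfold FF
  rw [← Finset.Nat.sum_antidiagonal_swap, Finset.mul_sum]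
  refine Finset.sum_congr rfl fun ij h => ?_
  rw [Finset.HasAntidiagonal.mem_antidiagonal] at h
  have : n.choose ij.2 = n.choose ij.1 := Nat.choose_symm_of_eq_add (by omega)
  simp only [Prod.fst_swap, Prod.snd_swap]
  rw [this, ← h, pow_add]
  have h2 : ((-1 : ℚ) ^ ij.2) * (-1) ^ ij.2 = 1 := by
    rw [← mul_pow]; norm_num
  linear_combination (-((ij.1 + ij.2).choose ij.1 : ℚ) * (-1) ^ ij.1
    * (Nat.centralBinom (ij.2 + p) : ℚ) * (Nat.centralBinom (ij.1 + q) : ℚ)) * h2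

lemma sum_weight (n : ℕ) (f : ℕ → ℕ → ℚ) :
    ∑ ij ∈ Finset.HasAntidiagonal.antidiagonal (n + 1), ((n + 1).choose ij.1 : ℚ) * (ij.1 * f ij.1 ij.2)
      = (n + 1) * ∑ ij ∈ Finset.HasAntidiagonal.antidiagonal n, (n.choose ij.1 : ℚ) * f (ij.1 + 1) ij.2 := by
  rw [Finset.Nat.sum_antidiagonal_succ, Finset.mul_sum]
  simp only [Nat.cast_zero, zero_mul, mul_zero, zero_add]
  refine Finset.sum_congr rfl fun ij _ => ?_
  have := Nat.add_one_mul_choose_eq n ij.1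
  have h : ((n : ℚ) + 1) * n.choose ij.1 = (n + 1).choose (ij.1 + 1) * (ij.1 + 1) := by
    exact_mod_cast this
  push_cast
  linear_combination (-f (ij.1 + 1) ij.2) * h

lemma cb_succ (m : ℕ) : ((m : ℚ) + 1) * Nat.centralBinom (m + 1)
    = 2 * (2 * m + 1) * Nat.centralBinom m := by
  exact_mod_cast Nat.succ_mul_centralBinom_succ m

lemma FF_parts_zero (p q : ℕ) : ((p : ℚ) + 1) * FF 0 (p + 1) q = (4 * p + 2) * FF 0 p q := by
  simp only [FF, Finset.Nat.antidiagonal_zero, Finset.sum_singleton, Nat.choose_self, zero_add]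
  simp only [pow_zero, Nat.cast_one, one_mul]
  linear_combination (Nat.centralBinom q : ℚ) * cb_succ p

lemma FF_parts (n p q : ℕ) :
    ((p : ℚ) + 1) * FF (n + 1) (p + 1) q + (n + 1) * FF n (p + 2) q
      = (4 * p + 2) * FF (n + 1) p q + 4 * (n + 1) * FF n (p + 1) q := by
  have h1 := sum_weight n (fun i j => ((-1) ^ j * (Nat.centralBinom (i + (p + 1)) : ℚ)
    * (Nat.centralBinom (j + q) : ℚ)))
  have h2 := sum_weight n (fun i j => ((-1) ^ j * (Nat.centralBinom (i + p) : ℚ)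
    * (Nat.centralBinom (j + q) : ℚ)))
  have e1 : ∀ i, i + 1 + (p + 1) = i + (p + 2) := fun i => by ring
  have e2 : ∀ i, i + 1 + p = i + (p + 1) := fun i => by ring
  simp only [e1, e2] at h1 h2
  have g1 : ((n : ℚ) + 1) * FF n (p + 2) q = _ := h1.symm
  have g2 : ((n : ℚ) + 1) * FF n (p + 1) q = _ := h2.symm
  rw [mul_assoc 4, g1, g2]
  unfold FF
  simp only [Finset.mul_sum]
  rw [← Finset.sum_add_distrib, ← Finset.sum_add_distrib]
  refine Finset.sum_congr rfl fun ij _ => ?_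
  have := cb_succ (ij.1 + p)
  push_cast at this
  rw [show ij.1 + (p + 1) = ij.1 + p + 1 by ring]
  linear_combination (((n + 1).choose ij.1 : ℚ) * (-1) ^ ij.2
    * (Nat.centralBinom (ij.2 + q) : ℚ)) * this

lemma FF_even (m p q : ℕ) : FF (2 * m) p q = FF (2 * m) q p := by
  rw [FF_symm, pow_mul]; norm_num

lemma FF_odd (m p q : ℕ) : FF (2 * m + 1) p q = - FF (2 * m + 1) q p := by
  rw [FF_symm, pow_succ, pow_mul]; norm_num

lemma relV (m l : ℕ) : ((l : ℚ) + 1 + 2 * m) * FF (2 * m) (l + 1) l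
    = (4 * l + 2 + 4 * m) * FF (2 * m) l l := by
  rcases m with _ | m
  · have := FF_parts_zero l l
    simpa using this
  · have h := FF_parts (2 * m + 1) l l
    have a := FF_succ (2 * m + 1) l l
    have b := FF_succ (2 * m + 1) (l + 1) l
    have c := FF_odd m l (l + 1)
    have d := FF_odd m (l + 1) (l + 1)
    rw [show 2 * (m + 1) = 2 * m + 1 + 1 by ring]
    push_cast at *
    linear_combination h + (2 * (m : ℚ) + 2) * b - 2 * (2 * (m : ℚ) + 2) * a
      + 2 * (2 * (m : ℚ) + 2) * c - (m + 1) * d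

lemma relT (m l : ℕ) : ((l : ℚ) + 1 + m) * FF (2 * m) (l + 1) (l + 1)
    = (4 * l + 2) * FF (2 * m) (l + 1) l := by
  rcases m with _ | m
  · have := FF_parts_zero l (l + 1)
    rw [FF_even 0 (l + 1) l]
    simpa using this
  · have h := FF_parts (2 * m + 1) l (l + 1)
    have a := FF_succ (2 * m + 1) (l + 1) (l + 1)
    have c := FF_odd m (l + 1) (l + 2)
    have d := FF_odd m (l + 1) (l + 1)
    have e := FF_even (m + 1) (l + 1) l
    rw [show 2 * (m + 1) = 2 * m + 1 + 1 by ring] at *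
    push_cast at *
    linear_combination h + ((m : ℚ) + 1) * a - ((m : ℚ) + 1) * c
      + 4 * (m + 1) * d - (4 * l + 2) * e

lemma relW (m l : ℕ) : ((l : ℚ) + 2 + 2 * m) * FF (2 * m) (l + 2) l
    = (4 * l + 6 + 8 * m) * FF (2 * m) (l + 1) l - m * FF (2 * m) (l + 1) (l + 1) := by
  rcases m with _ | m
  · have := FF_parts_zero (l + 1) l
    push_cast at this
    norm_num
    linear_combination this
  · have h := FF_parts (2 * m + 1) (l + 1) l
    have a := FF_succ (2 * m + 1) (l + 2) l
    have b := FF_succ (2 * m + 1) (l + 1) l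
    have a' := FF_succ (2 * m + 1) (l + 1) (l + 1)
    have c := FF_odd m (l + 1) (l + 2)
    have d := FF_odd m (l + 1) (l + 1)
    rw [show 2 * (m + 1) = 2 * m + 1 + 1 by ring] at *
    push_cast at *
    linear_combination h + (2 * (m : ℚ) + 2) * a - 4 * (2 * (m : ℚ) + 2) * b
      + (m + 1) * a' - (m + 1) * c + 4 * (m + 1) * d

lemma relStep (m l : ℕ) : FF (2 * (m + 1)) l l
    = 2 * (FF (2 * m) (l + 2) l - FF (2 * m) (l + 1) (l + 1)) := by
  have a := FF_succ (2 * m + 1) l l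
  have b := FF_succ (2 * m) (l + 1) l
  have c := FF_odd m l (l + 1)
  rw [show 2 * (m + 1) = 2 * m + 1 + 1 by ring]
  linear_combination a + 2 * b - c

lemma FF_closed (m l : ℕ) : FF (2 * m) l l * ((2 * m + l).factorial : ℚ)
    = (l.factorial : ℚ) * ((2 * m).factorial : ℚ) * Nat.centralBinom l * Nat.centralBinom m
      * Nat.centralBinom (m + l) := by
  induction m with
  | zero => simp [FF]; ring
  | succ m ih =>
    have hV := relV m l
    have hT := relT m l
    have hW := relW m l
    rw [relStep]
    have c1 := cb_succ m
    have c2 := cb_succ (m + l)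
    rw [show 2 * (m + 1) + l = 2 * m + l + 1 + 1 by ring, show m + 1 + l = m + l + 1 by ring,
      show 2 * (m + 1) = 2 * m + 1 + 1 by ring]
    simp only [Nat.factorial_succ]
    push_cast at *
    generalize FF (2 * m) (l + 2) l = W at *
    generalize FF (2 * m) (l + 1) (l + 1) = T' at *
    generalize FF (2 * m) (l + 1) l = V at *
    generalize FF (2 * m) l l = T at *
    generalize (Nat.centralBinom (m + 1) : ℚ) = x at *
    generalize (Nat.centralBinom (m + l + 1) : ℚ) = y at *
    generalize (Nat.centralBinom (m + l) : ℚ) = y0 at *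
    generalize (Nat.centralBinom m : ℚ) = x0 at *
    generalize ((2 * m + l).factorial : ℚ) = A at *
    generalize ((2 * m).factorial : ℚ) = B at *
    generalize (Nat.centralBinom l : ℚ) = z at *
    generalize (l.factorial : ℚ) = L at *
    have p1 : (m : ℚ) + 1 ≠ 0 := by positivity
    have p2 : (m : ℚ) + l + 1 ≠ 0 := by positivity
    have p3 : (l : ℚ) + 1 + 2 * m ≠ 0 := by positivity
    have p4 : (l : ℚ) + 1 + m ≠ 0 := by positivity
    have p5 : (l : ℚ) + 2 + 2 * m ≠ 0 := by positivity
    obtain rfl : x = 2 * (2 * m + 1) * x0 / (m + 1) := by field_simp; linear_combination c1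
    obtain rfl : y = 2 * (2 * (m + l) + 1) * y0 / (m + l + 1) := by
      field_simp; linear_combination c2
    obtain rfl : V = (4 * l + 2 + 4 * m) * T / (l + 1 + 2 * m) := by
      field_simp; linear_combination hV
    obtain rfl : T' = (4 * l + 2) * ((4 * l + 2 + 4 * m) * T / (l + 1 + 2 * m)) / (l + 1 + m) := by
      rw [eq_div_iff p4]; linear_combination hT
    clear hV hT c1 c2
    have hW' := (eq_div_iff p5).2 ((mul_comm _ _).trans hW)
    rw [hW']
    clear hW hW'
    have key : (2 * (2 * (m : ℚ) + 1)) * (2 * (2 * (m + l) + 1)) * (2 * m + 2) * (2 * m + 1)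
        / ((m + 1) * (m + l + 1)) * (T * A - L * B * z * x0 * y0) = 0 := by
      rw [ih]; ring
    rw [← sub_eq_zero, ← key]
    field_simp
    ring

lemma sum_eq (n lam : ℕ) :
    ∑ k ∈ Finset.range (n + 1),
        (-1 : ℚ) ^ k * (n.choose k : ℚ) * ((2 * n - 2 * k + 2 * lam).choose (n - k + lam) : ℚ)
          * (catalan (k + lam) : ℚ)
      = 2 * FF n lam lam - FF n lam (lam + 1) / 2 := by
  have hc : ∀ m : ℕ, (catalan m : ℚ) = 2 * Nat.centralBinom m - Nat.centralBinom (m + 1) / 2 := by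
    intro m
    have h : ((m : ℚ) + 1) * catalan m = Nat.centralBinom m := by
      exact_mod_cast succ_mul_catalan_eq_centralBinom m
    have h2 := cb_succ m
    have p1 : (m : ℚ) + 1 ≠ 0 := by positivity
    apply mul_left_cancel₀ p1
    linear_combination h + h2 / 2
  unfold FF
  rw [← Finset.Nat.sum_antidiagonal_swap,
    ← Finset.Nat.sum_antidiagonal_swap (f := fun ij : ℕ × ℕ => (n.choose ij.1 : ℚ) * ((-1) ^ ij.2 *
      (Nat.centralBinom (ij.1 + lam) : ℚ) * (Nat.centralBinom (ij.2 + (lam + 1)) : ℚ)))]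
  rw [Finset.Nat.sum_antidiagonal_eq_sum_range_succ_mk,
    Finset.Nat.sum_antidiagonal_eq_sum_range_succ_mk, Finset.mul_sum, Finset.sum_div,
    ← Finset.sum_sub_distrib]
  refine Finset.sum_congr rfl fun k hk => ?_
  have hk : k ≤ n := by simpa [Nat.lt_succ_iff] using hk
  simp only [Prod.swap_prod_mk]
  rw [hc, Nat.choose_symm hk, show 2 * n - 2 * k + 2 * lam = 2 * (n - k + lam) by omega,
    ← Nat.centralBinom_eq_two_mul_choose, show k + (lam + 1) = k + lam + 1 by ring]
  ring

lemma poch_fact (n l : ℕ) : ((n + 1).factorial : ℚ) * pochQ ((n : ℚ) + 2) l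
    = ((n + 1 + l).factorial : ℚ) := by
  induction l with
  | zero => simp [pochQ]
  | succ l ih =>
    unfold pochQ at *
    rw [Finset.prod_range_succ, ← mul_assoc, ih, ← add_assoc, Nat.factorial_succ]
    push_cast
    ring

lemma choose_odd (m : ℕ) : ((2 * m + 1).choose m : ℚ) = Nat.centralBinom (m + 1) / 2 := by
  have h : (2 * m + 2).choose (m + 1) = (2 * m + 1).choose m + (2 * m + 1).choose (m + 1) :=
    Nat.choose_succ_succ _ _
  have h2 : (2 * m + 1).choose (m + 1) = (2 * m + 1).choose m :=
    Nat.choose_symm_of_eq_add (by omega)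
  rw [Nat.centralBinom_eq_two_mul_choose, show 2 * (m + 1) = 2 * m + 2 by ring, h, h2]
  push_cast
  ring

/-- Theorem B: alternating convolution of central binomial coefficients with Catalan numbers. -/
theorem stmt_1 (n lam : ℕ) :
    ∑ k ∈ Finset.range (n + 1),
        (-1 : ℚ) ^ k * (n.choose k : ℚ) * ((2 * n - 2 * k + 2 * lam).choose (n - k + lam) : ℚ)
          * (catalan (k + lam) : ℚ)
      = ((lam.factorial : ℚ) / pochQ ((n : ℚ) + 2) lam)
          * ((2 * lam).choose lam : ℚ) * (n.choose (n / 2) : ℚ)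
          * ((n + 2 * lam).choose (lam + n / 2) : ℚ) := by
  rw [sum_eq]
  have hp := poch_fact n lam
  have f1 : ((n + 1).factorial : ℚ) ≠ 0 := by positivity
  have f2 : ((n + 1 + lam).factorial : ℚ) ≠ 0 := by positivity
  have hp' : pochQ ((n : ℚ) + 2) lam = ((n + 1 + lam).factorial : ℚ) / ((n + 1).factorial : ℚ) := by
    rw [eq_div_iff f1, mul_comm]; exact hp
  rw [hp', ← Nat.centralBinom_eq_two_mul_choose]
  clear hp hp'
  rcases Nat.even_or_odd' n with ⟨m, rfl | rfl⟩
  · rw [show 2 * m / 2 = m by omega, show 2 * m + 2 * lam = 2 * (m + lam) by ring, add_comm lam m,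
      ← Nat.centralBinom_eq_two_mul_choose, ← Nat.centralBinom_eq_two_mul_choose]
    have h := FF_closed m lam
    have hV := relV m lam
    rw [FF_even m lam (lam + 1)]
    rw [show 2 * m + 1 + lam = 2 * m + lam + 1 by ring] at *
    have f3 : ((2 * m + lam).factorial : ℚ) ≠ 0 := by positivity
    have p3 : (lam : ℚ) + 1 + 2 * m ≠ 0 := by positivity
    rw [(eq_div_iff p3).2 ((mul_comm _ _).trans hV), (eq_div_iff f3).2 h]
    simp only [Nat.factorial_succ]
    push_cast
    have p4 : 2 * (m : ℚ) + lam + 1 ≠ 0 := by positivity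
    field_simp
    ring
  · rw [show (2 * m + 1) / 2 = m by omega, show 2 * m + 1 + 2 * lam = 2 * (m + lam) + 1 by ring,
      add_comm lam m, choose_odd, choose_odd]
    have h := FF_closed (m + 1) lam
    have a := FF_succ (2 * m + 1) lam lam
    have c := FF_odd m lam (lam + 1)
    have d := FF_odd m lam lam
    rw [show m + 1 + lam = m + lam + 1 by ring] at h
    rw [show 2 * (m + 1) = 2 * m + 1 + 1 by ring] at *
    have e : 2 * FF (2 * m + 1) lam lam - FF (2 * m + 1) lam (lam + 1) / 2
        = FF (2 * m + 1 + 1) lam lam / 4 := by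
      linear_combination d - a / 4 - c / 4
    rw [e, (eq_div_iff f2).2 h]
    field_simp
    ring
end

section
/- Let n be a natural number and let a, c be real numbers such that (c)_n ≠ 0. Then ∑_{k=0}^{n} (−1)^k · binom(n,k) · (a)_k (a)_{n−k} / ((c)_k (c)_{n−k}) equals χ(n even) · (n!/(c)_n) · (a)_{⌊n/2⌋} (c−a)_{⌊n/2⌋} / ((1)_{⌊n/2⌋} (c)_{⌊n/2⌋}). -/
/-- Real Pochhammer symbol: `(x)_0 = 1`, `(x)_n = x(x+1)⋯(x+n-1)`. -/
def poch (x : ℝ) (n : ℕ) : ℝ := ∏ i ∈ Finset.range n, (x + i)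

theorem poch_succ (x : ℝ) (n : ℕ) : poch x (n + 1) = poch x n * (x + n) := by
  simp [poch, Finset.prod_range_succ]

theorem poch_zero (x : ℝ) : poch x 0 = 1 := by simp [poch]

theorem poch_one (n : ℕ) : poch 1 n = n.factorial := by
  induction n with
  | zero => simp [poch]
  | succ n ih => rw [poch_succ, ih, Nat.factorial_succ]; push_cast; ring

theorem poch_ne {c : ℝ} {n : ℕ} (hc : poch c n ≠ 0) {k : ℕ} (hk : k < n) : c + k ≠ 0 := by
  unfold poch at hc
  rw [Finset.prod_ne_zero_iff] at hc
  exact hc k (Finset.mem_range.2 hk)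

theorem poch_ne' {c : ℝ} {n : ℕ} (hc : poch c n ≠ 0) {k : ℕ} (hk : k ≤ n) : poch c k ≠ 0 := by
  unfold poch
  rw [Finset.prod_ne_zero_iff]
  intro i hi
  exact poch_ne hc (lt_of_lt_of_le (Finset.mem_range.1 hi) hk)

/-- Coefficient of the confluent hypergeometric series. -/
noncomputable def cf (a c : ℝ) (k : ℕ) : ℝ := poch a k / (poch c k * k.factorial)

theorem cf_zero (a c : ℝ) : cf a c 0 = 1 := by simp [cf, poch]

theorem cf_succ (a c : ℝ) (k : ℕ) :
    cf a c (k + 1) = cf a c k * ((a + k) / (((k : ℝ) + 1) * (c + k))) := by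
  unfold cf
  rw [poch_succ, poch_succ, Nat.factorial_succ, div_mul_div_comm]
  push_cast
  congr 1
  ring

/-- The convolution. -/
noncomputable def cT (a c : ℝ) (n : ℕ) : ℝ :=
  ∑ k ∈ Finset.range (n + 1), (-1 : ℝ) ^ k * (cf a c k * cf a c (n - k))

/-- Polynomial part of the Zeilberger certificate. -/
noncomputable def cN (a c n k : ℝ) : ℝ :=
  (c + n) * ((1 - a) * (2 * c + n) + 2 * (2 * a + n) * (k - n - 2))
    - (2 * a + n) * (k - n - 2) * (k - 1)

/-- The Zeilberger certificate. -/
noncomputable def cG (a c : ℝ) (n k : ℕ) : ℝ :=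
  (-1) ^ k * (k * (c + k - 1)) * cf a c k *
    (cf a c (n + 1 - k) / (((n : ℝ) + 2 - k) * (c + n + 1 - k))) * cN a c n k

theorem cG_step (a c : ℝ) (k j : ℕ) (hk : c + k ≠ 0) (hj : c + j ≠ 0) (hj1 : c + j + 1 ≠ 0) :
    ((k + j : ℝ) + 2) * (c + (k + j)) * (c + (k + j) + 1) * (2 * c + (k + j)) *
        ((-1) ^ k * (cf a c k * cf a c (j + 2)))
      - (2 * a + (k + j)) * (2 * c - 2 * a + (k + j)) * ((-1) ^ k * (cf a c k * cf a c j))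
      = cG a c (k + j) (k + 1) - cG a c (k + j) k := by
  unfold cG cN
  have e1 : k + j + 1 - (k + 1) = j := by omega
  have e2 : k + j + 1 - k = j + 1 := by omega
  rw [e1, e2, cf_succ a c (j + 1), cf_succ a c j, cf_succ a c k]
  push_cast
  have d1 : (k : ℝ) + j + 2 - (k + 1) = j + 1 := by ring
  have d2 : c + ((k : ℝ) + j) + 1 - (k + 1) = c + j := by ring
  have d3 : (k : ℝ) + j + 2 - k = j + 2 := by ring
  have d4 : c + ((k : ℝ) + j) + 1 - k = c + j + 1 := by ring
  have d5 : c + ((j : ℝ) + 1) = c + j + 1 := by ring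
  have d6 : (j : ℝ) + 1 + 1 = j + 2 := by ring
  rw [d1, d2, d3, d4, d5, d6, pow_succ]
  have h1 : (k : ℝ) + 1 ≠ 0 := by positivity
  have h2 : (j : ℝ) + 1 ≠ 0 := by positivity
  have h3 : (j : ℝ) + 2 ≠ 0 := by positivity
  field_simp
  ring

theorem cG_sum (a c : ℝ) (n : ℕ) (hc : poch c (n + 2) ≠ 0) (K : ℕ) (hK : K ≤ n + 1) :
    ∑ k ∈ Finset.range K,
      (((n : ℝ) + 2) * (c + n) * (c + n + 1) * (2 * c + n) *
        ((-1) ^ k * (cf a c k * cf a c (n + 2 - k)))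
      - (2 * a + n) * (2 * c - 2 * a + n) * ((-1) ^ k * (cf a c k * cf a c (n - k))))
      = cG a c n K := by
  induction K with
  | zero => simp [cG]
  | succ k ih =>
    rw [Finset.sum_range_succ, ih (by omega)]
    obtain ⟨j, rfl⟩ : ∃ j, n = k + j := ⟨n - k, by omega⟩
    have h3 : c + ((j + 1 : ℕ) : ℝ) ≠ 0 := poch_ne hc (by omega)
    have h := cG_step a c k j (poch_ne hc (by omega)) (poch_ne hc (by omega))
      (by push_cast at h3; rwa [← add_assoc] at h3)
    have e1 : k + j + 2 - k = j + 2 := by omega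
    have e2 : k + j - k = j := by omega
    rw [e1, e2]
    push_cast
    linarith

theorem cT_rec (a c : ℝ) (n : ℕ) (hc : poch c (n + 2) ≠ 0) :
    ((n : ℝ) + 2) * (c + n) * (c + n + 1) * (2 * c + n) * cT a c (n + 2)
      = (2 * a + n) * (2 * c - 2 * a + n) * cT a c n := by
  have h := cG_sum a c n hc (n + 1) le_rfl
  rw [Finset.sum_sub_distrib, ← Finset.mul_sum, ← Finset.mul_sum] at h
  have hT : cT a c (n + 2) = ∑ k ∈ Finset.range (n + 1),
      (-1 : ℝ) ^ k * (cf a c k * cf a c (n + 2 - k))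
      + (-1 : ℝ) ^ (n + 1) * (cf a c (n + 1) * cf a c 1)
      + (-1 : ℝ) ^ (n + 2) * (cf a c (n + 2) * cf a c 0) := by
    unfold cT
    rw [Finset.sum_range_succ, Finset.sum_range_succ]
    have e1 : n + 2 - (n + 1) = 1 := by omega
    have e2 : n + 2 - (n + 2) = 0 := by omega
    rw [e1, e2]
  have h0 : c ≠ 0 := by simpa using poch_ne hc (k := 0) (by omega)
  have hn : c + n ≠ 0 := poch_ne hc (by omega)
  have hn1 : c + n + 1 ≠ 0 := by
    have := poch_ne hc (k := n + 1) (by omega)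
    push_cast at this; rwa [← add_assoc] at this
  have hend : ((n : ℝ) + 2) * (c + n) * (c + n + 1) * (2 * c + n) *
      ((-1 : ℝ) ^ (n + 1) * (cf a c (n + 1) * cf a c 1)
      + (-1 : ℝ) ^ (n + 2) * (cf a c (n + 2) * cf a c 0)) + cG a c n (n + 1) = 0 := by
    unfold cG cN
    rw [cf_succ a c (n + 1), Nat.sub_self, cf_succ a c 0, cf_zero]
    push_cast
    have d1 : (n : ℝ) + 2 - (n + 1) = 1 := by ring
    have d2 : c + (n : ℝ) + 1 - (n + 1) = c := by ring
    have d3 : c + ((n : ℝ) + 1) = c + n + 1 := by ring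
    have d4 : (n : ℝ) + 1 + 1 = n + 2 := by ring
    rw [d1, d2, d3, d4, pow_succ _ (n + 1)]
    have h2 : (n : ℝ) + 2 ≠ 0 := by positivity
    simp only [add_zero, zero_add]
    field_simp
    ring
  rw [hT]
  unfold cT
  linarith

theorem cT_even (a c : ℝ) (m : ℕ) (hc : poch c (2 * m) ≠ 0) :
    cT a c (2 * m) = poch a m * poch (c - a) m / (poch c (2 * m) * (m.factorial * poch c m)) := by
  induction m with
  | zero => simp [cT, cf, poch]
  | succ m ih =>
    have hc' : poch c (2 * m + 2) ≠ 0 := hc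
    have ih := ih (poch_ne' hc' (by omega))
    have hr := cT_rec a c (2 * m) hc'
    rw [ih] at hr
    have e : 2 * (m + 1) = 2 * m + 2 := by ring
    rw [e]
    have hn := poch_ne hc' (k := 2 * m) (by omega)
    have hn1 := poch_ne hc' (k := 2 * m + 1) (by omega)
    have hm := poch_ne hc' (k := m) (by omega)
    have p1 := poch_ne' hc' (k := 2 * m) (by omega)
    have p2 := poch_ne' hc' (k := m) (by omega)
    have hf : (m.factorial : ℝ) ≠ 0 := by positivity
    rw [poch_succ c (2 * m + 1), poch_succ c (2 * m), poch_succ c m, poch_succ a m,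
      poch_succ (c - a) m, Nat.factorial_succ]
    push_cast at *
    rw [← add_assoc] at hn1
    have h1 : (m : ℝ) + 1 ≠ 0 := by positivity
    have hp : ((2 * (m : ℝ)) + 2) * (c + 2 * m) * (c + 2 * m + 1) * (2 * c + 2 * m) ≠ 0 := by
      have : ((2 * (m : ℝ)) + 2) * (c + 2 * m) * (c + 2 * m + 1) * (2 * c + 2 * m)
        = 4 * (m + 1) * (c + 2 * m) * (c + 2 * m + 1) * (c + m) := by ring
      rw [this]
      positivity
    apply mul_left_cancel₀ hp
    rw [hr, ← add_assoc]
    field_simp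

theorem cT_odd (a c : ℝ) (n : ℕ) (hn : ¬ Even n) : cT a c n = 0 := by
  have h : cT a c n = - cT a c n := by
    conv_lhs => unfold cT
    rw [← Finset.sum_range_reflect]
    unfold cT
    rw [← Finset.sum_neg_distrib]
    apply Finset.sum_congr rfl
    intro k hk
    have hk' : k ≤ n := by have := Finset.mem_range.1 hk; omega
    obtain ⟨j, rfl⟩ : ∃ j, n = k + j := ⟨n - k, by omega⟩
    have e1 : k + j + 1 - 1 - k = j := by omega
    have e2 : k + j - j = k := by omega
    have e3 : k + j - k = j := by omega
    rw [e1, e2, e3]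
    have ho : (-1 : ℝ) ^ (k + j) = -1 := (Nat.not_even_iff_odd.1 hn).neg_one_pow
    rw [pow_add] at ho
    rcases neg_one_pow_eq_or ℝ k with h | h
    · rw [h] at ho ⊢
      have h2 : (-1 : ℝ) ^ j = -1 := by linarith
      rw [h2]; ring
    · rw [h] at ho ⊢
      have h2 : (-1 : ℝ) ^ j = 1 := by linarith
      rw [h2]; ring
  linarith

/-- Proposition 5: binomial convolution formula extracted from Bailey's
product formula for `₁F₁(a; c; x) · ₁F₁(a; c; -x)`. -/
theorem stmt_9 (n : ℕ) (a c : ℝ) (hc : poch c n ≠ 0) :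
    ∑ k ∈ Finset.range (n + 1),
        (-1 : ℝ) ^ k * (n.choose k : ℝ) * (poch a k * poch a (n - k)) /
          (poch c k * poch c (n - k))
      = (if Even n then 1 else 0) * ((n.factorial : ℝ) / poch c n) *
          (poch a (n / 2) * poch (c - a) (n / 2) / (poch 1 (n / 2) * poch c (n / 2))) := by
  have hS : ∑ k ∈ Finset.range (n + 1),
        (-1 : ℝ) ^ k * (n.choose k : ℝ) * (poch a k * poch a (n - k)) /
          (poch c k * poch c (n - k)) = n.factorial * cT a c n := by
    unfold cT
    rw [Finset.mul_sum]
    apply Finset.sum_congr rfl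
    intro k hk
    have hk' : k ≤ n := by have := Finset.mem_range.1 hk; omega
    have p1 := poch_ne' hc (k := k) hk'
    have p2 := poch_ne' hc (k := n - k) (by omega)
    have f1 : (k.factorial : ℝ) ≠ 0 := by positivity
    have f2 : ((n - k).factorial : ℝ) ≠ 0 := by positivity
    rw [Nat.cast_choose ℝ hk']
    unfold cf
    field_simp
  rw [hS]
  by_cases he : Even n
  · obtain ⟨m, rfl⟩ := even_iff_exists_two_mul.1 he
    have e : 2 * m / 2 = m := by omega
    rw [cT_even a c m hc, if_pos he, e, poch_one]
    have p2 := poch_ne' hc (k := m) (by omega)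
    have f1 : (m.factorial : ℝ) ≠ 0 := by positivity
    field_simp
  · rw [cT_odd a c n he, if_neg he]
    simp
end

section
/- For all natural numbers n and λ, ∑_{k=0}^{n} (−1)^k · binom(n,k) · (n−1)(n−3) · C_λ² / (C_{k+λ} · C_{n−k+λ}) equals 3 · χ(n even) · C_λ · binom(2λ, λ) · binom(n, ⌊n/2⌋) / (C_{λ+⌊n/2⌋} · binom(λ+n, λ) · binom(2λ+2n, λ+n)), as an equality of rational numbers. -/
/-- Reciprocal Catalan number. -/
def rc (m : ℕ) : ℚ := 1 / (catalan m : ℚ)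

lemma cat_central (m : ℕ) : ((m : ℚ) + 1) * (catalan m : ℚ) = (m.centralBinom : ℚ) := by
  exact_mod_cast succ_mul_catalan_eq_centralBinom m

lemma central_pos (m : ℕ) : (0 : ℚ) < (m.centralBinom : ℚ) := by
  exact_mod_cast Nat.centralBinom_pos m

lemma cat_pos (m : ℕ) : (0 : ℚ) < (catalan m : ℚ) := by
  have h := cat_central m
  have h2 := central_pos m
  have h3 : (0 : ℚ) < (m : ℚ) + 1 := by positivity
  rw [← h] at h2
  exact (mul_pos_iff_of_pos_left h3).1 h2

lemma central_succ (m : ℕ) :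
    ((m : ℚ) + 1) * ((m + 1).centralBinom : ℚ) = 2 * (2 * m + 1) * (m.centralBinom : ℚ) := by
  exact_mod_cast Nat.succ_mul_centralBinom_succ m

lemma cat_succ (m : ℕ) :
    ((m : ℚ) + 2) * (catalan (m + 1) : ℚ) = 2 * (2 * m + 1) * (catalan m : ℚ) := by
  have h := central_succ m
  rw [← cat_central m, ← cat_central (m + 1)] at h
  push_cast at h
  have h3 : (m : ℚ) + 1 ≠ 0 := by positivity
  apply mul_left_cancel₀ h3
  linear_combination h

lemma rc_succ (m : ℕ) : rc (m + 1) * (2 * (2 * (m : ℚ) + 1)) = ((m : ℚ) + 2) * rc m := by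
  have h := cat_succ m
  have h1 := (cat_pos m).ne'
  have h2 := (cat_pos (m + 1)).ne'
  unfold rc
  field_simp
  linear_combination -h

/-- The summand. -/
def tt (N l k : ℕ) : ℚ := (-1) ^ k * (N.choose k : ℚ) * rc (k + l) * rc (N - k + l)

lemma choose_step (K j : ℕ) :
    ((K + (j + 1)).choose (K + 1) : ℚ) * ((K : ℚ) + 1)
      = ((K + (j + 1)).choose K : ℚ) * ((j : ℚ) + 1) := by
  have h := Nat.choose_succ_right_eq (K + (j + 1)) K
  rw [Nat.add_sub_cancel_left] at h
  exact_mod_cast h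

lemma tt_step (l K j : ℕ) :
    tt (K + (j + 1)) l (K + 1) * (((K : ℚ) + 1) * (2 * (K + l) + 1) * (j + l + 2))
      = - tt (K + (j + 1)) l K * (((j : ℚ) + 1) * (K + l + 2) * (2 * (j + l) + 1)) := by
  have e1 : K + (j + 1) - (K + 1) + l = j + l := by omega
  have e2 : K + (j + 1) - K + l = (j + l) + 1 := by omega
  have e3 : K + 1 + l = (K + l) + 1 := by omega
  unfold tt
  rw [e1, e2, e3, pow_succ]
  have h1 := choose_step K j
  have h2 := rc_succ (K + l)
  have h3 := rc_succ (j + l)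
  push_cast at h2 h3
  generalize ((K + (j + 1)).choose (K + 1) : ℚ) = c1 at *
  generalize ((K + (j + 1)).choose K : ℚ) = c0 at *
  generalize rc (K + l + 1) = x1 at *
  generalize rc (K + l) = x0 at *
  generalize rc (j + l + 1) = y1 at *
  generalize rc (j + l) = y0 at *
  generalize ((-1 : ℚ)) ^ K = s
  have e : (c1 * ((K : ℚ) + 1)) * (x1 * (2 * (2 * ((K : ℚ) + l) + 1))) * (((j : ℚ) + l + 2) * y0)
     = (c0 * ((j : ℚ) + 1)) * (((K : ℚ) + l + 2) * x0) * (y1 * (2 * (2 * ((j : ℚ) + l) + 1))) := by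
    rw [h1, h2, h3]
  linear_combination (-s / 2) * e

lemma partial_sum (N l K : ℕ) : ∀ j : ℕ, N = K + j →
    ∑ k ∈ Finset.range (K + 1),
      ((2 * (N : ℚ) - 10) * (k * ((N : ℚ) - k)) + (l + 2) * N * (2 * N + 2 * l - 1)) * tt N l k
      = (j : ℚ) * (K + l + 2) * (2 * (j + l) - 1) * tt N l K := by
  induction K with
  | zero =>
    intro j hj
    rw [Nat.zero_add] at hj
    subst hj
    rw [Finset.sum_range_succ, Finset.sum_range_zero]
    push_cast
    ring
  | succ K ih =>
    intro j hj
    have hN : N = K + (j + 1) := by omega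
    rw [Finset.sum_range_succ, ih (j + 1) hN]
    have h := tt_step l K j
    subst hN
    push_cast
    linear_combination h

lemma choose_shift (n k : ℕ) :
    ((n + 2).choose (k + 1) : ℚ) * (((k : ℚ) + 1) * ((n : ℚ) + 1 - k))
      = ((n : ℚ) + 2) * (n + 1) * (n.choose k : ℚ) := by
  have h1 : ((n : ℚ) + 2) * ((n + 1).choose k : ℚ) = ((n + 2).choose (k + 1) : ℚ) * (k + 1) := by
    exact_mod_cast Nat.add_one_mul_choose_eq (n + 1) k
  rcases Nat.lt_or_ge (n + 1) k with hk | hk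
  · rw [Nat.choose_eq_zero_of_lt (show n + 2 < k + 1 by omega),
      Nat.choose_eq_zero_of_lt (show n < k by omega)]
    simp
  · have h2 : (n.choose k : ℚ) * (n + 1) = ((n + 1).choose k : ℚ) * ((n : ℚ) + 1 - k) := by
      have := Nat.choose_mul_succ_eq n k
      have h3 : ((n + 1 - k : ℕ) : ℚ) = (n : ℚ) + 1 - k := by
        rw [Nat.cast_sub hk]; push_cast; ring
      rw [← h3]
      exact_mod_cast this
    linear_combination (-((n : ℚ) + 1 - k)) * h1 - ((n : ℚ) + 2) * h2

lemma weighted (n l : ℕ) :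
    ∑ k ∈ Finset.range (n + 2 + 1), ((k : ℚ) * (((n + 2 : ℕ) : ℚ) - k)) * tt (n + 2) l k
      = -(((n : ℚ) + 2) * (n + 1)) * ∑ k ∈ Finset.range (n + 1), tt n (l + 1) k := by
  rw [Finset.sum_range_succ, Finset.sum_range_succ', Finset.mul_sum]
  simp only [Nat.cast_zero, zero_mul, sub_self, mul_zero, add_zero]
  apply Finset.sum_congr rfl
  intro k hk
  have hk' : k ≤ n := by simpa [Nat.lt_succ_iff] using hk
  have h := choose_shift n k
  unfold tt
  have e1 : k + 1 + l = k + (l + 1) := by omega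
  have e2 : n + 2 - (k + 1) + l = n - k + (l + 1) := by omega
  rw [e1, e2, pow_succ]
  push_cast
  linear_combination (-(-1 : ℚ) ^ k * rc (k + (l + 1)) * rc (n - k + (l + 1))) * h

/-- The inner sum. -/
def SS (n l : ℕ) : ℚ := ∑ k ∈ Finset.range (n + 1), tt n l k

lemma SS_rec (n l : ℕ) :
    ((l : ℚ) + 2) * (2 * n + 2 * l + 3) * SS (n + 2) l
      = 2 * ((n : ℚ) - 3) * (n + 1) * SS n (l + 1) := by
  have h := partial_sum (n + 2) l (n + 2) 0 rfl
  have hw := weighted n l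
  have hs : ∀ A B : ℚ, ∑ k ∈ Finset.range (n + 2 + 1),
      (A * ((k : ℚ) * (((n + 2 : ℕ) : ℚ) - k)) + B) * tt (n + 2) l k
      = A * ∑ k ∈ Finset.range (n + 2 + 1), ((k : ℚ) * (((n + 2 : ℕ) : ℚ) - k)) * tt (n + 2) l k
        + B * SS (n + 2) l := by
    intro A B
    unfold SS
    rw [Finset.mul_sum, Finset.mul_sum, ← Finset.sum_add_distrib]
    apply Finset.sum_congr rfl
    intro k _
    ring
  rw [hs, hw] at h
  change _ * (_ * SS n (l + 1)) + _ = _ at h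
  push_cast at h
  have h3 : (n : ℚ) + 2 ≠ 0 := by positivity
  apply mul_left_cancel₀ h3
  linear_combination h

lemma choose_rel (l M : ℕ) :
    ((l + (M + 2)).choose l : ℚ) * (((M : ℚ) + 2) * (M + 1))
      = ((l : ℚ) + M + 2) * (l + 1) * ((l + 1 + M).choose (l + 1) : ℚ) := by
  have h1 := Nat.add_choose_mul_factorial_mul_factorial l (M + 2)
  have h2 := Nat.add_choose_mul_factorial_mul_factorial (l + 1) M
  rw [← Nat.choose_symm_add] at h1 h2
  rw [show l + (M + 2) = (l + 1 + M) + 1 by omega, Nat.factorial_succ (l + 1 + M), ← h2,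
    Nat.factorial_succ (M + 1), Nat.factorial_succ M, Nat.factorial_succ l] at h1
  rw [show l + (M + 2) = (l + 1 + M) + 1 by omega]
  have h3 := congrArg (Nat.cast : ℕ → ℚ) h1
  push_cast at h3
  have a1 : (l.factorial : ℚ) ≠ 0 := by exact_mod_cast l.factorial_ne_zero
  have a2 : (M.factorial : ℚ) ≠ 0 := by exact_mod_cast M.factorial_ne_zero
  apply mul_left_cancel₀ a1
  apply mul_left_cancel₀ a2
  linear_combination h3

lemma even_case (m : ℕ) : ∀ l : ℕ,
    (2 * (m : ℚ) - 1) * (2 * m - 3) * SS (2 * m) l *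
      ((catalan (l + m) : ℚ) * ((l + 2 * m).choose l : ℚ) * ((l + 2 * m).centralBinom : ℚ))
      = 3 * ((l : ℚ) + 1) * (m.centralBinom : ℚ) := by
  induction m with
  | zero =>
    intro l
    have h := cat_central l
    have h1 := (cat_pos l).ne'
    simp [SS, tt, rc]
    rw [← h]
    field_simp
  | succ m ih =>
    intro l
    have h := ih (l + 1)
    have hr := SS_rec (2 * m) l
    have hc := choose_rel l (2 * m)
    have hb := central_succ (l + 1 + 2 * m)
    have hm := central_succ m
    rw [show 2 * (m + 1) = 2 * m + 2 by ring]
    rw [show l + 1 + 2 * m + 1 = l + (2 * m + 2) by ring] at hb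
    rw [show l + 1 + m = l + (m + 1) by ring] at h
    push_cast at h hr hc hb hm ⊢
    generalize SS (2 * m + 2) l = s1 at *
    generalize SS (2 * m) (l + 1) = s0 at *
    generalize ((l + (2 * m + 2)).choose l : ℚ) = c1 at *
    generalize ((l + 1 + 2 * m).choose (l + 1) : ℚ) = c0 at *
    generalize ((l + (2 * m + 2)).centralBinom : ℚ) = b1 at *
    generalize ((l + 1 + 2 * m).centralBinom : ℚ) = b0 at *
    generalize (m.centralBinom : ℚ) = d0 at *
    generalize ((m + 1).centralBinom : ℚ) = d1 at *
    generalize (catalan (l + (m + 1)) : ℚ) = c at *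
    have p1 : ((l : ℚ) + 2) * (2 * (2 * m) + 2 * l + 3) ≠ 0 := by positivity
    have p2 : (2 * (m : ℚ) + 2) * (2 * m + 1) ≠ 0 := by positivity
    have p3 : ((l : ℚ) + 1 + 2 * m + 1) ≠ 0 := by positivity
    apply mul_left_cancel₀ (mul_ne_zero (mul_ne_zero p1 p2) p3)
    have e : ((((l : ℚ) + 2) * (2 * (2 * m) + 2 * l + 3) * s1) * (c1 * ((2 * (m : ℚ) + 2) * (2 * m + 1)))
        * (((l : ℚ) + 1 + 2 * m + 1) * b1))
        = (2 * (2 * (m : ℚ) - 3) * (2 * m + 1) * s0)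
          * (((l : ℚ) + 2 * m + 2) * (l + 1) * c0) * (2 * (2 * ((l : ℚ) + 1 + 2 * m) + 1) * b0) := by
      rw [hr, hc, hb]
    linear_combination (2 * (m : ℚ) + 1) * (2 * m - 1) * c * e
      + 4 * (2 * (m : ℚ) + 1) ^ 2 * ((l : ℚ) + 2 * m + 2) * (l + 1) * (2 * ((l : ℚ) + 1 + 2 * m) + 1) * h
      - 3 * ((l : ℚ) + 1) * (((l : ℚ) + 2) * (2 * (2 * m) + 2 * l + 3)) * (2 * (2 * m + 1))
         * ((l : ℚ) + 1 + 2 * m + 1) * hm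

lemma odd_case (n l : ℕ) (hn : Odd n) : SS n l = 0 := by
  have h : SS n l = - SS n l := by
    unfold SS
    conv_lhs => rw [← Finset.sum_range_reflect]
    rw [← Finset.sum_neg_distrib]
    apply Finset.sum_congr rfl
    intro k hk
    have hk' : k ≤ n := by simpa [Nat.lt_succ_iff] using hk
    have e : n + 1 - 1 - k = n - k := by omega
    have e2 : n - (n - k) = k := by omega
    unfold tt
    rw [e, e2, Nat.choose_symm hk']
    have s : (-1 : ℚ) ^ (n - k) = - (-1) ^ k := by
      have h1 : (-1 : ℚ) ^ (n - k) * (-1) ^ k = -1 := by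
        rw [← pow_add, Nat.sub_add_cancel hk', hn.neg_one_pow]
      rcases neg_one_pow_eq_or ℚ k with h2 | h2 <;> rw [h2] at h1 ⊢ <;> linarith
    rw [s]
    ring
  linarith

/-- Corollary 8: reciprocal formula of Theorem A. -/
theorem stmt_12 (n lam : ℕ) :
    ∑ k ∈ Finset.range (n + 1),
        (-1 : ℚ) ^ k * (n.choose k : ℚ) *
          (((n : ℚ) - 1) * ((n : ℚ) - 3) * (catalan lam : ℚ) ^ 2) /
          ((catalan (k + lam) : ℚ) * (catalan (n - k + lam) : ℚ))
      = 3 * (if Even n then 1 else 0) * (catalan lam : ℚ) * ((2 * lam).choose lam : ℚ)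
          * (n.choose (n / 2) : ℚ) /
          ((catalan (lam + n / 2) : ℚ) * ((lam + n).choose lam : ℚ)
            * ((2 * lam + 2 * n).choose (lam + n) : ℚ)) := by
  have hL : ∑ k ∈ Finset.range (n + 1),
        (-1 : ℚ) ^ k * (n.choose k : ℚ) *
          (((n : ℚ) - 1) * ((n : ℚ) - 3) * (catalan lam : ℚ) ^ 2) /
          ((catalan (k + lam) : ℚ) * (catalan (n - k + lam) : ℚ))
      = (((n : ℚ) - 1) * ((n : ℚ) - 3) * (catalan lam : ℚ) ^ 2) * SS n lam := by
    unfold SS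
    rw [Finset.mul_sum]
    apply Finset.sum_congr rfl
    intro k _
    unfold tt rc
    have h1 := (cat_pos (k + lam)).ne'
    have h2 := (cat_pos (n - k + lam)).ne'
    field_simp
  rw [hL]
  rcases Nat.even_or_odd n with hn | hn
  · obtain ⟨m, hm⟩ := hn
    have hm2 : n = 2 * m := by omega
    subst hm2
    have hE : Even (2 * m) := even_two_mul m
    have h := even_case m lam
    have hc := cat_central lam
    rw [if_pos hE, show 2 * m / 2 = m by omega, ← Nat.mul_add, ← Nat.centralBinom_eq_two_mul_choose,
      ← Nat.centralBinom_eq_two_mul_choose, ← Nat.centralBinom_eq_two_mul_choose, ← hc]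
    have h1 := (cat_pos (lam + m)).ne'
    have h2 := (central_pos (lam + 2 * m)).ne'
    have h3 : ((lam + 2 * m).choose lam : ℚ) ≠ 0 := by
      exact_mod_cast (Nat.choose_pos (Nat.le_add_right _ _)).ne'
    rw [eq_div_iff (mul_ne_zero (mul_ne_zero h1 h3) h2)]
    push_cast
    linear_combination (catalan lam : ℚ) ^ 2 * h
  · rw [odd_case n lam hn, if_neg (Nat.not_even_iff_odd.2 hn)]
    simp
end

section
/- For all natural numbers n and λ, ∑_{k=0}^{n} (−1)^k · binom(n,k) · (1−n) · binom(2λ, λ)² / (binom(2k+2λ, k+λ) · binom(2n−2k+2λ, n−k+λ)) equals χ(n even) · binom(2λ, λ)² · binom(n, ⌊n/2⌋) / (binom(λ+n, n) · binom(2λ+2n, λ+n) · binom(2λ+n, λ+⌊n/2⌋)), as an equality of rational numbers. -/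
/-- reciprocal central binomial -/
def rcb (m : ℕ) : ℚ := 1 / (m.centralBinom : ℚ)

theorem rcb_succ (m : ℕ) : rcb m * (m + 1) = 2 * (2 * m + 1) * rcb (m + 1) := by
  have h := Nat.succ_mul_centralBinom_succ m
  have h1 : (m.centralBinom : ℚ) ≠ 0 := by exact_mod_cast m.centralBinom_ne_zero
  have h2 : ((m + 1).centralBinom : ℚ) ≠ 0 := by exact_mod_cast (m + 1).centralBinom_ne_zero
  have h' : ((m : ℚ) + 1) * ((m + 1).centralBinom : ℚ) = 2 * (2 * m + 1) * m.centralBinom := by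
    exact_mod_cast h
  unfold rcb
  field_simp
  linarith

/-- the alternating sum -/
def altS (n l : ℕ) : ℚ :=
  ∑ k ∈ Finset.range (n + 1), (-1 : ℚ) ^ k * (n.choose k : ℚ) * (rcb (l + k) * rcb (l + (n - k)))

theorem partial_sum_s14 (m l i : ℕ) (hi : i ≤ 2 * m + 2) :
    ((l : ℚ) + 1) * (2 * l + 4 * m + 3) *
      ∑ k ∈ Finset.range (i + 1), (-1 : ℚ) ^ k * ((2 * m + 2).choose k : ℚ) *
        (rcb (l + k) * rcb (l + (2 * m + 2 - k)))
    - (2 * (m : ℚ) + 1) * (4 * m - 2) *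
      ∑ k ∈ Finset.range i, (-1 : ℚ) ^ k * ((2 * m).choose k : ℚ) *
        (rcb (l + 1 + k) * rcb (l + 1 + (2 * m - k)))
    = (-1 : ℚ) ^ i * ((2 * m + 1).choose i : ℚ) * (l + i + 1) *
        (2 * (l + (2 * m + 2 - i : ℚ)) - 1) * (rcb (l + i) * rcb (l + (2 * m + 2 - i))) := by
  induction i with
  | zero =>
    simp only [zero_add, Finset.sum_range_one, Finset.sum_range_zero, Nat.choose_zero_right, Nat.cast_zero]
    push_cast
    ring
  | succ i ih =>
    have ih := ih (by omega)
    rw [Finset.sum_range_succ _ i, Finset.sum_range_succ _ (i + 1)]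
    obtain ⟨d, hd⟩ : ∃ d, 2 * m + 1 = i + d := ⟨2 * m + 1 - i, by omega⟩
    have e1 : 2 * m + 2 - i = d + 1 := by omega
    have e2 : 2 * m + 2 - (i + 1) = d := by omega
    rw [e1] at ih
    rw [e2]
    have hdq : (2 * (m : ℚ) + 1) = i + d := by exact_mod_cast hd
    have hz : (2 * (m : ℚ) + 1) * ((2 * m).choose i : ℚ) * (rcb (l + 1 + i) * rcb (l + 1 + (2 * m - i)))
        = (i + 1) * ((2 * m + 1).choose (i + 1) : ℚ) * (rcb (l + (i + 1)) * rcb (l + d)) := by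
      have h := Nat.add_one_mul_choose_eq (2 * m) i
      have h' : (2 * (m : ℚ) + 1) * ((2 * m).choose i : ℚ)
        = ((2 * m + 1).choose (i + 1) : ℚ) * (i + 1) := by exact_mod_cast h
      rw [h', show l + 1 + i = l + (i + 1) by ring]
      rcases Nat.eq_zero_or_pos d with h0 | h0
      · have : (2 * m + 1).choose (i + 1) = 0 := Nat.choose_eq_zero_of_lt (by omega)
        rw [this]; simp
      · rw [show l + 1 + (2 * m - i) = l + d by omega]; ring
    have hp : ((2 * m + 2).choose (i + 1) : ℚ)
        = ((2 * m + 1).choose i : ℚ) + ((2 * m + 1).choose (i + 1) : ℚ) := by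
      exact_mod_cast Nat.choose_succ_succ (2 * m + 1) i
    have hxy : ((2 * m + 1).choose (i + 1) : ℚ) * (i + 1) = ((2 * m + 1).choose i : ℚ) * d := by
      have h := Nat.choose_succ_right_eq (2 * m + 1) i
      rw [show 2 * m + 1 - i = d by omega] at h
      exact_mod_cast h
    have r1 := rcb_succ (l + i)
    have r2 := rcb_succ (l + d)
    rw [hp]
    rw [show l + i + 1 = l + (i + 1) by ring] at r1
    rw [show l + d + 1 = l + (d + 1) by ring] at r2
    push_cast at r1 r2 ⊢
    have hF : ((l : ℚ) + i + 1) * (2 * (l + (2 * m + 2 - i : ℚ)) - 1) * (rcb (l + i) * rcb (l + (d + 1)))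
       = (l + d + 1) * (2 * (l + i) + 1) * (rcb (l + (i + 1)) * rcb (l + d)) := by
      have : (2 * (m : ℚ) + 2 - i) = d + 1 := by linarith
      rw [this]
      linear_combination (2 * ((l : ℚ) + d) + 1) * rcb (l + (d + 1)) * r1
        - (2 * ((l : ℚ) + i) + 1) * rcb (l + (i + 1)) * r2
    generalize rcb (l + (i + 1)) * rcb (l + d) = F at *
    generalize rcb (l + i) * rcb (l + (d + 1)) = F0 at *
    generalize rcb (l + 1 + i) * rcb (l + 1 + (2 * m - i)) = F1 at *
    generalize ((2 * m + 1).choose (i + 1) : ℚ) = x at *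
    generalize ((2 * m + 1).choose i : ℚ) = y at *
    generalize ((2 * m).choose i : ℚ) = z at *
    have hm : (m : ℚ) = (i + d - 1) / 2 := by linarith
    rw [pow_succ]
    have key : (-1 : ℚ) ^ i * (y * ((l + d + 1) * (2 * (l + i) + 1)) * F
        - ((l : ℚ) + 1) * (2 * l + 4 * m + 3) * (y + x) * F
        - (4 * m - 2) * ((i + 1) * x * F))
        = (-1 : ℚ) ^ i * (-1) * x * (l + (i + 1) + 1) * (2 * (l + (2 * m + 2 - (i + 1) : ℚ)) - 1) * F := by
      rw [hm]
      linear_combination (-1 : ℚ) ^ i * F * (1 - 2 * i) * hxy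
    linear_combination ih + key + (-1 : ℚ) ^ i * y * hF - (-1 : ℚ) ^ i * (4 * m - 2) * hz

theorem altS_rec (m l : ℕ) :
    ((l : ℚ) + 1) * (2 * l + 4 * m + 3) * altS (2 * m + 2) l
      = (2 * (m : ℚ) + 1) * (4 * m - 2) * altS (2 * m) (l + 1) := by
  have h := partial_sum_s14 m l (2 * m + 2) le_rfl
  rw [Finset.sum_range_succ _ (2 * m + 1)] at h
  rw [Nat.choose_eq_zero_of_lt (show 2 * m + 1 < 2 * m + 2 by omega),
    Nat.choose_eq_zero_of_lt (show 2 * m < 2 * m + 1 by omega)] at h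
  unfold altS
  simp only [Nat.cast_zero, mul_zero, zero_mul, add_zero] at h
  linarith

theorem altS_even (m l : ℕ) :
    (1 - 2 * (m : ℚ)) * altS (2 * m) l * ((l + 2 * m).choose (2 * m) : ℚ)
      = (m.centralBinom : ℚ) * rcb (l + 2 * m) * rcb (l + m) := by
  induction m generalizing l with
  | zero => simp [altS]
  | succ m ih =>
    have ih := ih (l + 1)
    have hr := altS_rec m l
    have hc := Nat.succ_mul_centralBinom_succ m
    have hc' : ((m : ℚ) + 1) * ((m + 1).centralBinom : ℚ) = 2 * (2 * m + 1) * m.centralBinom := by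
      exact_mod_cast hc
    have r := rcb_succ (l + 2 * m + 1)
    have b1 := Nat.add_one_mul_choose_eq (l + 2 * m + 1) (2 * m + 1)
    have b2 := Nat.choose_succ_right_eq (l + 2 * m + 1) (2 * m)
    rw [show l + 2 * m + 1 - 2 * m = l + 1 by omega] at b2
    rw [show l + 1 + 2 * m = l + 2 * m + 1 by ring, show l + 1 + m = l + (m + 1) by ring] at ih
    rw [show 2 * (m + 1) = 2 * m + 2 by ring, show l + (2 * m + 2) = l + 2 * m + 1 + 1 by ring]
    have b1' : ((l : ℚ) + 2 * m + 1 + 1) * ((l + 2 * m + 1).choose (2 * m + 1) : ℚ)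
      = ((l + 2 * m + 1 + 1).choose (2 * m + 2) : ℚ) * (2 * m + 1 + 1) := by exact_mod_cast b1
    have b2' : ((l + 2 * m + 1).choose (2 * m + 1) : ℚ) * (2 * m + 1)
      = ((l + 2 * m + 1).choose (2 * m) : ℚ) * (l + 1) := by exact_mod_cast b2
    push_cast at r ⊢
    generalize ((l + 2 * m + 1 + 1).choose (2 * m + 2) : ℚ) = c2 at *
    generalize ((l + 2 * m + 1).choose (2 * m + 1) : ℚ) = c1 at *
    generalize ((l + 2 * m + 1).choose (2 * m) : ℚ) = c0 at *
    generalize rcb (l + 2 * m + 1 + 1) = f2 at *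
    generalize rcb (l + 2 * m + 1) = f1 at *
    generalize rcb (l + (m + 1)) = f0 at *
    generalize altS (2 * m + 2) l = S2 at *
    generalize altS (2 * m) (l + 1) = S0 at *
    generalize ((m + 1).centralBinom : ℚ) = B1 at *
    generalize (m.centralBinom : ℚ) = B0 at *
    have hl : (0 : ℚ) ≤ l := Nat.cast_nonneg l
    have hm : (0 : ℚ) ≤ m := Nat.cast_nonneg m
    have n1 : (l : ℚ) + 1 ≠ 0 := by positivity
    have n2 : 2 * (l : ℚ) + 4 * m + 3 ≠ 0 := by positivity
    have n3 : 2 * (m : ℚ) + 1 ≠ 0 := by positivity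
    have n4 : (m : ℚ) + 1 ≠ 0 := by positivity
    have hS2 : S2 = (2 * m + 1) * (4 * m - 2) * S0 / ((l + 1) * (2 * l + 4 * m + 3)) := by
      field_simp; linarith
    have hc1 : c1 = c0 * (l + 1) / (2 * m + 1) := by field_simp; linarith
    have hc2 : c2 = (l + 2 * m + 2) * c1 / (2 * (m + 1)) := by field_simp; linarith
    have hB : B1 = 2 * (2 * m + 1) * B0 / (m + 1) := by field_simp; linarith
    have hf : f2 = f1 * (l + 2 * m + 2) / (2 * (2 * l + 4 * m + 3)) := by
      field_simp; linarith
    rw [hS2, hc2, hc1, hB, hf]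
    field_simp
    linear_combination (2 * (2 * (m : ℚ) + 1)) * ih

theorem altS_odd (n l : ℕ) (hn : ¬ Even n) : altS n l = 0 := by
  have h : altS n l = - altS n l := by
    conv_lhs => unfold altS
    rw [← Finset.sum_range_reflect]
    unfold altS
    rw [← Finset.sum_neg_distrib]
    refine Finset.sum_congr rfl fun k hk => ?_
    have hk : k ≤ n := by simpa [Nat.lt_succ_iff] using hk
    rw [show n + 1 - 1 - k = n - k by omega, Nat.choose_symm hk, Nat.sub_sub_self hk]
    have hs : (-1 : ℚ) ^ (n - k) = - (-1 : ℚ) ^ k := by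
      have h1 : (-1 : ℚ) ^ (n - k) * (-1) ^ k = -1 := by
        rw [← pow_add, Nat.sub_add_cancel hk]
        exact Odd.neg_one_pow (Nat.not_even_iff_odd.mp hn)
      have h2 : (-1 : ℚ) ^ k * (-1) ^ k = 1 := by
        rw [← mul_pow]; simp
      linear_combination (-1 : ℚ) ^ k * h1 - (-1 : ℚ) ^ (n - k) * h2
    rw [hs]; ring
  linarith

/-- Corollary 10: reciprocal formula of Theorem C. -/
theorem stmt_14 (n lam : ℕ) :
    ∑ k ∈ Finset.range (n + 1),
        (-1 : ℚ) ^ k * (n.choose k : ℚ) *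
          ((1 - (n : ℚ)) * ((2 * lam).choose lam : ℚ) ^ 2) /
          (((2 * k + 2 * lam).choose (k + lam) : ℚ)
            * ((2 * n - 2 * k + 2 * lam).choose (n - k + lam) : ℚ))
      = (if Even n then 1 else 0) * ((2 * lam).choose lam : ℚ) ^ 2 * (n.choose (n / 2) : ℚ) /
          (((lam + n).choose n : ℚ) * ((2 * lam + 2 * n).choose (lam + n) : ℚ)
            * ((2 * lam + n).choose (lam + n / 2) : ℚ)) := by
  have hL : ∑ k ∈ Finset.range (n + 1),
        (-1 : ℚ) ^ k * (n.choose k : ℚ) *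
          ((1 - (n : ℚ)) * ((2 * lam).choose lam : ℚ) ^ 2) /
          (((2 * k + 2 * lam).choose (k + lam) : ℚ)
            * ((2 * n - 2 * k + 2 * lam).choose (n - k + lam) : ℚ))
      = (1 - (n : ℚ)) * ((2 * lam).choose lam : ℚ) ^ 2 * altS n lam := by
    unfold altS
    rw [Finset.mul_sum]
    refine Finset.sum_congr rfl fun k hk => ?_
    rw [show 2 * k + 2 * lam = 2 * (lam + k) by ring,
      show 2 * n - 2 * k + 2 * lam = 2 * (lam + (n - k)) by omega,
      show k + lam = lam + k by ring, show n - k + lam = lam + (n - k) by ring]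
    unfold rcb Nat.centralBinom
    rw [div_mul_div_comm, div_eq_mul_one_div]
    ring
  rw [hL]
  by_cases hn : Even n
  · obtain ⟨m, rfl⟩ := hn
    rw [if_pos ⟨m, rfl⟩, ← two_mul]
    have h := altS_even m lam
    have hc : ((lam + 2 * m).choose (2 * m) : ℚ) ≠ 0 := by
      exact_mod_cast (Nat.choose_pos (by omega)).ne'
    rw [show 2 * m / 2 = m by omega,
      show 2 * lam + 2 * (2 * m) = 2 * (lam + 2 * m) by ring,
      show 2 * lam + 2 * m = 2 * (lam + m) by ring]
    have e : ∀ j : ℕ, ((2 * j).choose j : ℚ) = (j.centralBinom : ℚ) := fun j => rfl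
    rw [e, e, e, e]
    have c1 : ((lam + 2 * m).centralBinom : ℚ) ≠ 0 := by
      exact_mod_cast Nat.centralBinom_ne_zero _
    have c2 : ((lam + m).centralBinom : ℚ) ≠ 0 := by
      exact_mod_cast Nat.centralBinom_ne_zero _
    unfold rcb at h
    push_cast
    rw [eq_div_iff (by positivity)]
    field_simp at h
    linear_combination (lam.centralBinom : ℚ) ^ 2 * h
  · rw [altS_odd n lam hn, if_neg hn]
    simp
end
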